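/- Let $y_1, y_2 > 0$ with $y_2 > 1$ and $h = \sqrt{y_1+y_2-y_1y_2} > 0$. For $r > 1$, $\lim_{r\downarrow 1}\frac{(1-y_2)h}{2\pi i}\oint_{|\xi|=1} \frac{(\xi+\frac{1}{hr})(\xi+\frac{h}{r})}{(\xi+\frac{y_2}{hr})(\xi+\frac{h}{y_2 r})}\cdot \frac{r}{(y_2 r \xi + h)^2}\,d\xi = -\frac{h^2 y_1 y_2}{(y_1+y_2)^3}$. -/

import Mathlib

open Real Complex Filter Topology

/-- Residue evaluation of a rational integrand with a triple pole at `-b` inside the unit circle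
and a simple pole at `-c` outside it. -/
lemma circleIntegral_quadratic_div_simple_mul_triple (p q b c : ℂ) (hb : ‖b‖ < 1) (hc : 1 < ‖c‖) :
    ∮ ξ in C(0, 1), (ξ + p) * (ξ + q) / ((ξ + c) * (ξ + b) ^ 3) =
      (p - c) * (q - c) / (c - b) ^ 3 * (2 * (π : ℂ) * Complex.I) := by
  have hd : c - b ≠ 0 := by
    intro h
    rw [sub_eq_zero] at h
    subst h
    linarith
  have hξb : ∀ ξ ∈ Metric.sphere (0 : ℂ) 1, ξ - -b ≠ 0 := by
    intro ξ hξ h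
    rw [mem_sphere_zero_iff_norm, sub_eq_zero.mp h, norm_neg] at hξ
    linarith
  have hξc : ∀ ξ ∈ Metric.closedBall (0 : ℂ) 1, ξ + c ≠ 0 := by
    intro ξ hξ h
    rw [mem_closedBall_zero_iff, eq_neg_of_add_eq_zero_left h, norm_neg] at hξ
    linarith
  have hint : ∀ (a : ℂ) (n : ℤ), CircleIntegrable (fun ξ => a * (ξ - -b) ^ n) 0 1 := by
    intro a n
    refine ContinuousOn.circleIntegrable zero_le_one ?_
    exact continuousOn_const.mul
      ((continuousOn_id.sub continuousOn_const).zpow₀ n fun ξ hξ => Or.inl (hξb ξ hξ))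
  have hdiff : DifferentiableOn ℂ (fun ξ => (ξ + c)⁻¹) (Metric.closedBall 0 1) := by
    intro ξ hξ
    exact ((differentiableAt_id.add_const c).inv (hξc ξ hξ)).differentiableWithinAt
  have hintc : ∀ a : ℂ, CircleIntegrable (fun ξ => a * (ξ + c)⁻¹) 0 1 := fun a =>
    (continuousOn_const.mul
      (hdiff.continuousOn.mono Metric.sphere_subset_closedBall)).circleIntegrable zero_le_one
  have hzero : ∮ ξ in C(0, 1), (ξ + c)⁻¹ = 0 :=
    (hdiff.diffContOnCl_ball subset_rfl).circleIntegral_eq_zero zero_le_one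
  have hone : ∮ ξ in C(0, 1), (ξ - -b) ^ (-1 : ℤ) = 2 * (π : ℂ) * Complex.I := by
    simp only [zpow_neg_one]
    exact circleIntegral.integral_sub_inv_of_mem_ball (by simpa using hb)
  set A := (p - c) * (q - c) / (c - b) ^ 3 with hA
  set B := (p - b + (q - b)) / (c - b) - (p - b) * (q - b) / (c - b) ^ 2 with hB
  set D := (p - b) * (q - b) / (c - b) with hD
  have hcongr : ∮ ξ in C(0, 1), (ξ + p) * (ξ + q) / ((ξ + c) * (ξ + b) ^ 3) =
      ∮ ξ in C(0, 1), (A * (ξ - -b) ^ (-1 : ℤ) + B * (ξ - -b) ^ (-2 : ℤ) +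
        D * (ξ - -b) ^ (-3 : ℤ) - A * (ξ + c)⁻¹) := by
    refine circleIntegral.integral_congr zero_le_one fun ξ hξ => ?_
    have h1 := hξb ξ hξ
    have h2 := hξc ξ (Metric.sphere_subset_closedBall hξ)
    rw [sub_neg_eq_add] at h1
    have e2 : (ξ + b) ^ (-2 : ℤ) = ((ξ + b) ^ 2)⁻¹ := by
      rw [zpow_neg]; norm_cast
    have e3 : (ξ + b) ^ (-3 : ℤ) = ((ξ + b) ^ 3)⁻¹ := by
      rw [zpow_neg]; norm_cast
    simp only [sub_neg_eq_add, zpow_neg_one, e2, e3, hA, hB, hD]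
    field_simp
    ring
  have hint₂ : CircleIntegrable
      (fun ξ => A * (ξ - -b) ^ (-1 : ℤ) + B * (ξ - -b) ^ (-2 : ℤ)) 0 1 :=
    (hint A _).add (hint B _)
  have hint₃ : CircleIntegrable (fun ξ => A * (ξ - -b) ^ (-1 : ℤ) + B * (ξ - -b) ^ (-2 : ℤ) +
      D * (ξ - -b) ^ (-3 : ℤ)) 0 1 := hint₂.add (hint D _)
  rw [hcongr, circleIntegral.integral_sub hint₃ (hintc A),
    circleIntegral.integral_add hint₂ (hint D _),
    circleIntegral.integral_add (hint A _) (hint B _)]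
  simp only [circleIntegral.integral_const_mul]
  rw [hone, hzero, circleIntegral.integral_sub_zpow_of_ne (by norm_num),
    circleIntegral.integral_sub_zpow_of_ne (by norm_num)]
  ring

theorem stmt_13 (y1 y2 h : ℝ) (hy1 : 0 < y1) (hy2 : 1 < y2) (hh : 0 < h)
    (hh2 : h ^ 2 = y1 + y2 - y1 * y2) :
    Filter.Tendsto
      (fun r : ℝ =>
        ((1 - (y2 : ℂ)) * (h : ℂ) / (2 * (π : ℂ) * Complex.I)) *
          ∮ ξ in C(0, 1),
            ((ξ + 1 / ((h : ℂ) * r)) * (ξ + (h : ℂ) / r)) /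
                ((ξ + (y2 : ℂ) / ((h : ℂ) * r)) * (ξ + (h : ℂ) / ((y2 : ℂ) * r))) *
              ((r : ℂ) / ((y2 : ℂ) * r * ξ + (h : ℂ)) ^ 2))
      (𝓝[>] (1 : ℝ))
      (𝓝 (-((h : ℂ) ^ 2 * (y1 : ℂ) * (y2 : ℂ) / ((y1 : ℂ) + (y2 : ℂ)) ^ 3))) := by
  have hy2pos : 0 < y2 := by linarith
  have hlt : h < y2 := by nlinarith
  have hratio : 1 < y2 / h := (one_lt_div hh).mpr hlt
  refine tendsto_const_nhds.congr' ?_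
  filter_upwards [Ioo_mem_nhdsGT hratio] with r hr
  obtain ⟨hr1, hr2⟩ := hr
  have hrpos : 0 < r := by linarith
  rw [lt_div_iff₀ hh] at hr2
  have hb : ‖(h : ℂ) / ((y2 : ℂ) * r)‖ < 1 := by
    rw [← ofReal_mul, ← ofReal_div, norm_real, Real.norm_of_nonneg (by positivity),
      div_lt_one (by positivity)]
    nlinarith
  have hc : 1 < ‖(y2 : ℂ) / ((h : ℂ) * r)‖ := by
    rw [← ofReal_mul, ← ofReal_div, norm_real, Real.norm_of_nonneg (by positivity),
      one_lt_div (by positivity)]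
    linarith
  have hr0 : (r : ℂ) ≠ 0 := by exact_mod_cast hrpos.ne'
  have hh0 : (h : ℂ) ≠ 0 := by exact_mod_cast hh.ne'
  have hy0 : (y2 : ℂ) ≠ 0 := by exact_mod_cast hy2pos.ne'
  have hy1' : (y2 : ℂ) - 1 ≠ 0 := by exact_mod_cast (sub_pos.mpr hy2).ne'
  have hs : (y1 : ℂ) + y2 ≠ 0 := by exact_mod_cast (add_pos hy1 hy2pos).ne'
  have hπ : (π : ℂ) ≠ 0 := by exact_mod_cast Real.pi_ne_zero
  have hsq : (h : ℂ) ^ 2 = y1 + y2 - y1 * y2 := by exact_mod_cast hh2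
  have hintegrand : ∀ ξ : ℂ,
      ((ξ + 1 / ((h : ℂ) * r)) * (ξ + (h : ℂ) / r)) /
          ((ξ + (y2 : ℂ) / ((h : ℂ) * r)) * (ξ + (h : ℂ) / ((y2 : ℂ) * r))) *
        ((r : ℂ) / ((y2 : ℂ) * r * ξ + (h : ℂ)) ^ 2) =
      1 / ((y2 : ℂ) ^ 2 * r) * ((ξ + 1 / ((h : ℂ) * r)) * (ξ + (h : ℂ) / r) /
        ((ξ + (y2 : ℂ) / ((h : ℂ) * r)) * (ξ + (h : ℂ) / ((y2 : ℂ) * r)) ^ 3)) := by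
    intro ξ
    have hfac : (y2 : ℂ) * r * ξ + h = y2 * r * (ξ + (h : ℂ) / ((y2 : ℂ) * r)) := by
      field_simp
    rw [hfac]
    generalize ξ + (h : ℂ) / ((y2 : ℂ) * r) = u
    generalize ξ + (y2 : ℂ) / ((h : ℂ) * r) = v
    generalize (ξ + 1 / ((h : ℂ) * r)) * (ξ + (h : ℂ) / r) = w
    field_simp
  simp only [hintegrand]
  rw [circleIntegral.integral_const_mul,
    circleIntegral_quadratic_div_simple_mul_triple _ _ _ _ hb hc]
  have hnum : (1 / ((h : ℂ) * r) - y2 / (h * r)) * ((h : ℂ) / r - y2 / (h * r)) =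
      y1 * (y2 - 1) ^ 2 / (h ^ 2 * r ^ 2) := by
    field_simp
    linear_combination (1 - (y2 : ℂ)) * hsq
  have hden : (y2 : ℂ) / (h * r) - h / (y2 * r) = (y2 - 1) * (y1 + y2) / (h * y2 * r) := by
    field_simp
    linear_combination -hsq
  rw [hnum, hden]
  field_simp
  ring
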